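/- Let n ≥ 2 be an integer. If f is an n-loop in ℋ_n based at 0 such that for every i ≥ 1 the composite R_i ∘ f : [0,1]^n → Y_i^{(n)} is nullhomotopic relative to ∂([0,1]^n), then f itself is nullhomotopic relative to ∂([0,1]^n) in ℋ_n. Equivalently, the natural homomorphism β_n : π_n(ℋ_n, 0) → ∏_{i≥1} π_n(Y_i^{(n)}, 0), γ ↦ ((R_i)_*(γ))_{i≥1}, is injective. -/

import Mathlib

open scoped Topology Topology.Homotopy unitInterval

noncomputable section

/-- The `n`-sphere of radius `1/j` centered at `(1/j, 0, …, 0)` in `ℝ^{n+1}`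
(it passes through the origin). -/
def hawSphere (n j : ℕ) : Set (EuclideanSpace ℝ (Fin (n+1))) :=
  Metric.sphere (EuclideanSpace.single (0 : Fin (n+1)) ((1 : ℝ)/j)) (1/j)

/-- The `n`-dimensional Hawaiian earring: the union of the spheres `hawSphere n j`, `j ≥ 1`. -/
def hawaiian (n : ℕ) : Set (EuclideanSpace ℝ (Fin (n+1))) :=
  ⋃ j ∈ {j : ℕ | 1 ≤ j}, hawSphere n j

/-- The union `Y_i^{(n)}` of the first `i` spheres of the `n`-dimensional Hawaiian earring. -/
def Ysub (n i : ℕ) : Set (EuclideanSpace ℝ (Fin (n+1))) :=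
  ⋃ j ∈ Finset.Icc 1 i, hawSphere n j

lemma zero_mem_hawSphere (n j : ℕ) : (0 : EuclideanSpace ℝ (Fin (n+1))) ∈ hawSphere n j := by
  have : dist (0 : EuclideanSpace ℝ (Fin (n+1)))
      (EuclideanSpace.single (0 : Fin (n+1)) ((1 : ℝ)/j)) = 1/j := by
    rw [dist_zero_left, EuclideanSpace.norm_single, Real.norm_eq_abs,
      abs_of_nonneg (one_div_nonneg.mpr (Nat.cast_nonneg j))]
  exact Metric.mem_sphere.mpr this

lemma zero_mem_hawaiian (n : ℕ) : (0 : EuclideanSpace ℝ (Fin (n+1))) ∈ hawaiian n :=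
  Set.mem_biUnion (by simp : (1 : ℕ) ∈ {j : ℕ | 1 ≤ j}) (zero_mem_hawSphere n 1)

lemma zero_mem_Ysub (n i : ℕ) : (0 : EuclideanSpace ℝ (Fin (n+1))) ∈ Ysub n (i+1) :=
  Set.mem_biUnion (by simp : (1 : ℕ) ∈ Finset.Icc 1 (i+1)) (zero_mem_hawSphere n 1)

/-- The basepoint (the origin) of the Hawaiian earring. -/
def hawaiianPt (n : ℕ) : ↥(hawaiian n) := ⟨0, zero_mem_hawaiian n⟩

/-- The basepoint (the origin) of `Y_{i+1}^{(n)}`. -/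
def YsubPt (n i : ℕ) : ↥(Ysub n (i+1)) := ⟨0, zero_mem_Ysub n i⟩

/-- Composition of a generalized loop with a basepoint-preserving continuous map. -/
def GenLoop.compCM {X Y : Type*} [TopologicalSpace X] [TopologicalSpace Y] {x : X} {y : Y}
    {N : Type*} (φ : C(X, Y)) (hφ : φ x = y) (p : Ω^ N X x) : Ω^ N Y y :=
  ⟨φ.comp p.1, fun t ht => by
    simp only [ContinuousMap.comp_apply]
    rw [p.2 t ht, hφ]⟩

/-- The homomorphism `φ_*` induced on `N`-th homotopy groups by a basepoint-preserving
continuous map `φ`, sending the class of a loop `f` to the class of `φ ∘ f`. -/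
def piInduced {X Y : Type*} [TopologicalSpace X] [TopologicalSpace Y] {x : X} {y : Y}
    (N : Type*) (φ : C(X, Y)) (hφ : φ x = y) :
    HomotopyGroup N X x → HomotopyGroup N Y y :=
  Quotient.map (GenLoop.compCM φ hφ) fun _ _ h =>
    h.map fun F => F.compContinuousMap φ

/-!
The earring carries the topology of a *shrinking wedge*: the subspace of `∏ j, S_j` formed by the
families with at most one entry different from the base point. A homotopy of each coordinate that
keeps the base point fixed therefore induces a homotopy of the whole family.

Fix a loop and an index `j`. As the dimension of the cube is smaller than the dimension of the
ambient space, general position pushes all coordinates to the base point along any given dyadic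
grid. For a grid that is fine enough, each cell is then mapped either into `S_j` or into the wedge
of the other spheres, so the class of the loop is a product of classes coming from the two sides.
Because `π_n` is abelian for `n ≥ 2`, this makes it the product of its two restrictions. If
coordinate `j` is nullhomotopic, the loop can thus be deformed off `S_j`. Remove the spheres one
after the other, each by a homotopy composed with the retraction that kills the spheres already
removed. Then the infinite concatenation of these homotopies is eventually stationary in each
coordinate, hence continuous.
-/

/-! ### Pushing maps from cubes into spheres off a dyadic grid -/

/-- The points of the cube lying on one of the walls `x i = c / 2 ^ e i`, `c ∈ ℕ`, which cut the
cube into dyadic boxes of side `2 ^ (-e i)` in direction `i`. -/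
def dyadicGrid {N : Type*} (e : N → ℕ) : Set (N → I) :=
  {x | ∃ i, ∃ c : ℕ, (2 : ℝ) ^ e i * x i = c}

/-- `GridDeformable N b` says that maps from the cube `I^N` to a space `S` can be pushed to the
point `b : S` along any dyadic grid, keeping fixed the points that already sit at `b`, and in such a
way that everything starting in a neighbourhood `W` of `b`, independent of the grid and of the map,
ends at `b`. -/
def GridDeformable (N : Type*) {S : Type*} [TopologicalSpace S] (b : S) : Prop :=
  ∃ W ∈ 𝓝 b, ∀ (e : N → ℕ) (f : C(N → I, S)), ∃ f' : C(N → I, S),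
    f.HomotopicRel f' (f ⁻¹' {b}) ∧ (∀ x ∈ dyadicGrid e, f' x = b) ∧ ∀ x, f x ∈ W → f' x = b

section DyadicGrid

variable {N : Type*}

lemma isClosed_dyadicGrid [Finite N] (e : N → ℕ) : IsClosed (dyadicGrid e) := by
  have : dyadicGrid e = ⋃ i, {x : N → I | (2 : ℝ) ^ e i * x i ∈ Set.range ((↑) : ℕ → ℝ)} := by
    ext x; simp [dyadicGrid, eq_comm]
  rw [this]
  exact isClosed_iUnion_of_finite fun i =>
    Nat.isClosedEmbedding_coe_real.isClosed_range.preimage (by fun_prop)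

/-- General position: a generic translate of a smooth map misses the line `ℝ ∙ v` on all walls of
the grid, since walls and line together have dimension `card N` only. -/
lemma exists_approx_notMem_span_on_dyadicGrid [Fintype N] {V : Type*} [NormedAddCommGroup V]
    [NormedSpace ℝ V] [FiniteDimensional ℝ V] (hV : Fintype.card N < Module.finrank ℝ V) (v : V)
    (e : N → ℕ) (F : C(N → I, V)) {ε : ℝ} (hε : 0 < ε) :
    ∃ g : C(N → I, V), (∀ x, ‖g x - F x‖ < ε) ∧ ∀ x ∈ dyadicGrid e, g x ∉ Submodule.span ℝ {v} := by
  classical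
  have hF : Continuous fun y : N → ℝ => F fun i => Set.projIcc 0 1 zero_le_one (y i) := by fun_prop
  obtain ⟨g, hg, hgF, -⟩ :=
    hF.exists_contDiff_approx 1 (ε := fun _ => ε / 2) continuous_const fun _ => half_pos hε
  -- The wall `y i = c / 2 ^ e i` does not involve `p i`, so `p i` parametrizes the line.
  let bad (i : N) (c : ℕ) (p : N → ℝ) : V := p i • v - g (Function.update p i (c / 2 ^ e i))
  have hbad (i : N) (c : ℕ) : ContDiff ℝ 1 (bad i c) := by
    have hupdate : ContDiff ℝ 1 fun p : N → ℝ => Function.update p i ((c : ℝ) / 2 ^ e i) := by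
      rw [contDiff_pi]
      intro j
      rcases eq_or_ne j i with rfl | hj
      · simpa using contDiff_const
      · simpa [hj] using contDiff_apply ℝ ℝ j
    have hgC1 : ContDiff ℝ 1 g := by simpa using hg
    exact ((contDiff_apply ℝ ℝ i).smul contDiff_const).sub (hgC1.comp hupdate)
  have hdim : dimH (⋃ i, ⋃ c, Set.range (bad i c)) < Module.finrank ℝ V := by
    refine lt_of_le_of_lt ?_ (Nat.cast_lt.2 hV)
    simp only [dimH_iUnion]
    exact iSup_le fun i => iSup_le fun c => (hbad i c).dimH_range_le.trans (by simp)
  obtain ⟨w, hw, hw0⟩ :=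
    (dense_compl_of_dimH_lt_finrank hdim).exists_dist_lt (0 : V) (half_pos hε)
  refine ⟨⟨fun x => g (fun i => x i) + w, ?_⟩, fun x => ?_, ?_⟩
  · exact (hg.continuous.comp (by fun_prop)).add continuous_const
  · have hgx : ‖g (fun i => x i) - F x‖ < ε / 2 := by
      simpa [dist_eq_norm] using hgF fun i => x i
    rw [dist_zero_left] at hw0
    calc ‖g (fun i => x i) + w - F x‖ = ‖g (fun i => x i) - F x + w‖ := by congr 1; abel
      _ < ε := (norm_add_le _ _).trans_lt (by linarith)
  · rintro x ⟨i, c, hx⟩ hmem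
    obtain ⟨s, hs⟩ := Submodule.mem_span_singleton.1 hmem
    refine hw (Set.mem_iUnion₂.2 ⟨i, c, Function.update (fun j => (x j : ℝ)) i s, ?_⟩)
    have hxi : (c : ℝ) / 2 ^ e i = x i := by rw [← hx]; field_simp
    simp only [bad, hxi, Function.update_self, Function.update_idem, Function.update_eq_self]
    rw [hs]
    exact add_sub_cancel_left _ _

end DyadicGrid

section Sphere

open Metric

variable {V X : Type*} [NormedAddCommGroup V] [NormedSpace ℝ V] [TopologicalSpace X]

/-- The radial projection of a nowhere vanishing map to the unit sphere. -/
def normalizeMap (v : C(X, V)) (hv : ∀ x, v x ≠ 0) : C(X, sphere (0 : V) 1) where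
  toFun x := ⟨‖v x‖⁻¹ • v x, by simpa using norm_smul_inv_norm (𝕜 := ℝ) (hv x)⟩
  continuous_toFun := by
    have := v.continuous.norm.inv₀ fun x => norm_ne_zero_iff.2 (hv x)
    exact (this.smul v.continuous).subtype_mk _

lemma normalizeMap_eq_of_eq {v : C(X, V)} (hv : ∀ x, v x ≠ 0) {x : X} {u : sphere (0 : V) 1}
    (h : v x = u) : normalizeMap v hv x = u :=
  Subtype.ext (by simp [normalizeMap, h])

lemma norm_normalize_sub_le (v : V) {u : V} (hu : ‖u‖ = 1) :
    ‖NormedSpace.normalize v - u‖ ≤ 2 * ‖v - u‖ := by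
  have hnorm : ‖NormedSpace.normalize v - v‖ ≤ |1 - ‖v‖| := by
    rcases eq_or_ne v 0 with rfl | hv
    · simp
    · have : NormedSpace.normalize v - v = (1 - ‖v‖) • NormedSpace.normalize v := by
        rw [sub_smul, one_smul, NormedSpace.norm_smul_normalize]
      rw [this, norm_smul, NormedSpace.norm_normalize_eq_one_iff.2 hv, mul_one, Real.norm_eq_abs]
  have habs : |1 - ‖v‖| ≤ ‖v - u‖ := by
    rw [← hu, norm_sub_rev]
    exact abs_norm_sub_norm_le u v
  linarith [norm_sub_le_norm_sub_add_norm_sub (NormedSpace.normalize v) v u]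

lemma homotopicRel_normalizeMap {f : C(X, sphere (0 : V) 1)} {g : C(X, V)}
    (hg : ∀ x, g x ≠ 0) (hfg : ∀ x, ‖g x - f x‖ < 1) {A : Set X} (hA : ∀ x ∈ A, g x = f x) :
    f.HomotopicRel (normalizeMap g hg) A := by
  let v : C(I × X, V) := ⟨fun p => f p.2 + (p.1 : ℝ) • (g p.2 - f p.2), by fun_prop⟩
  have hv (p : I × X) : v p ≠ 0 := by
    intro h
    have : ‖(p.1 : ℝ) • (g p.2 - f p.2)‖ = 1 := by
      rw [← neg_eq_of_add_eq_zero_right h, norm_neg, norm_eq_of_mem_sphere]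
    rw [norm_smul, Real.norm_of_nonneg p.1.2.1] at this
    nlinarith [p.1.2.2, hfg p.2, norm_nonneg (g p.2 - f p.2)]
  refine ⟨⟨⟨normalizeMap v hv, fun x => ?_, fun x => ?_⟩, fun t x hx => ?_⟩⟩
  · exact normalizeMap_eq_of_eq hv (by simp [v])
  · exact Subtype.ext (by simp [normalizeMap, v, -smul_add])
  · exact normalizeMap_eq_of_eq hv (by simp [v, hA x hx])

lemma exists_homotopicRel_id_of_le_dist (e : sphere (0 : V) 1) {r : ℝ} (hr : 0 < r) :
    ∃ p : C(sphere (0 : V) 1, sphere (0 : V) 1),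
      (ContinuousMap.id _).HomotopicRel p {-e} ∧ ∀ u, r ≤ dist u e → p u = -e := by
  let s (p : I × sphere (0 : V) 1) : ℝ := min 1 (p.1 * (dist p.2 e / r))
  have hs0 (p) : 0 ≤ s p := le_min zero_le_one (mul_nonneg p.1.2.1 (by positivity))
  have hs1 (p) : s p ≤ 1 := min_le_left _ _
  let v : C(I × sphere (0 : V) 1, V) :=
    ⟨fun p => (1 - s p) • (p.2 : V) + s p • -(e : V), by fun_prop⟩
  have hv (p : I × sphere (0 : V) 1) : v p ≠ 0 := by
    intro h
    have heq : (1 - s p) • (p.2 : V) = s p • (e : V) := by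
      simpa [v, add_neg_eq_zero] using h
    have hhalf : s p = 1 / 2 := by
      have := congrArg norm heq
      simp only [norm_smul, norm_eq_of_mem_sphere, Real.norm_of_nonneg (hs0 p),
        Real.norm_of_nonneg (sub_nonneg.2 (hs1 p))] at this
      linarith
    have hpe : p.2 = e := by
      rw [hhalf, sub_half] at heq
      exact Subtype.ext (smul_right_injective V one_half_pos.ne' heq)
    simp [s, hpe] at hhalf
  refine ⟨(normalizeMap v hv).comp ⟨fun u => (1, u), by fun_prop⟩,
    ⟨⟨⟨normalizeMap v hv, fun u => ?_, fun u => rfl⟩, fun t u hu => ?_⟩⟩, fun u hu => ?_⟩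
  · exact normalizeMap_eq_of_eq hv (by simp [v, s])
  · obtain rfl : u = -e := hu
    refine normalizeMap_eq_of_eq hv ?_
    simp only [v, ContinuousMap.coe_mk, ContinuousMap.id_apply, coe_neg_sphere]
    module
  · have hs : s (1, u) = 1 := by simpa [s] using (one_le_div hr).2 hu
    exact normalizeMap_eq_of_eq hv (by simp [v, hs])

lemma homotopicRel_comp_right {Y Z : Type*} [TopologicalSpace Y] [TopologicalSpace Z]
    {g₀ g₁ : C(Y, Z)} {B : Set Y} (h : g₀.HomotopicRel g₁ B) (f : C(X, Y)) {A : Set X}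
    (hf : Set.MapsTo f A B) : (g₀.comp f).HomotopicRel (g₁.comp f) A :=
  h.map fun G => ⟨G.toHomotopy.compContinuousMap f, fun t _ hx => G.eq_fst t (hf hx)⟩

lemma exists_pos_le_dist_of_isCompact {K : Set X} (hK : IsCompact K) {Y : Type*} [MetricSpace Y]
    (f : C(X, Y)) {y : Y} (hf : ∀ x ∈ K, f x ≠ y) : ∃ r > 0, ∀ x ∈ K, r ≤ dist (f x) y := by
  have hy : y ∉ f '' K := by rintro ⟨x, hx, rfl⟩; exact hf x hx rfl
  obtain ⟨r, hr, hball⟩ := Metric.isOpen_iff.1 (hK.image f.continuous).isClosed.isOpen_compl y hy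
  exact ⟨r, hr, fun x hx => not_lt.1 fun hlt => hball hlt ⟨x, hx, rfl⟩⟩

lemma dist_neg_self_sphere (e : sphere (0 : V) 1) : dist (-e) e = 2 := by
  rw [Subtype.dist_eq, dist_eq_norm, coe_neg_sphere, ← neg_add', norm_neg, ← two_smul ℝ, norm_smul]
  simp

/-- Near `e`, replace `f` by the radial projection of a general position approximation `g`; a cutoff
function leaves `f` unchanged near `-e`. -/
lemma exists_homotopicRel_ne_on_dyadicGrid {N : Type*} [Fintype N] [FiniteDimensional ℝ V]
    (hV : Fintype.card N < Module.finrank ℝ V) (e : sphere (0 : V) 1) (k : N → ℕ)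
    (f : C(N → I, sphere (0 : V) 1)) :
    ∃ f₁ : C(N → I, sphere (0 : V) 1), f.HomotopicRel f₁ (f ⁻¹' {-e}) ∧
      (∀ x ∈ dyadicGrid k, f₁ x ≠ e) ∧ ∀ x, dist (f₁ x) e ≤ 1 / 2 → dist (f x) e ≤ 1 := by
  obtain ⟨g, hgf, hgrid⟩ := exists_approx_notMem_span_on_dyadicGrid hV (e : V) k
    ⟨fun x => (f x : V), by fun_prop⟩ (by norm_num : (0 : ℝ) < 1 / 4)
  let cutoff (x : N → I) : ℝ := max 0 (min 1 (2 - dist (f x) e))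
  have hcutoff (x) : |cutoff x| ≤ 1 := by
    rw [abs_of_nonneg (le_max_left _ _)]
    exact max_le zero_le_one (min_le_left _ _)
  let G : C(N → I, V) := ⟨fun x => f x + cutoff x • (g x - f x), by fun_prop⟩
  have hGf (x) : ‖G x - f x‖ < 1 / 4 := by
    simp only [G, ContinuousMap.coe_mk, add_sub_cancel_left, norm_smul, Real.norm_eq_abs]
    exact (mul_le_of_le_one_left (norm_nonneg _) (hcutoff x)).trans_lt (hgf x)
  have hG (x) : G x ≠ 0 := by
    intro h
    have := hGf x
    rw [h, zero_sub, norm_neg, norm_eq_of_mem_sphere] at this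
    norm_num at this
  have hnear (x) (hx : dist (normalizeMap G hG x) e ≤ 1 / 2) : dist (f x) e ≤ 1 := by
    have hd : dist (normalizeMap G hG x) (f x) ≤ 2 * ‖G x - f x‖ := by
      rw [Subtype.dist_eq, dist_eq_norm]
      exact norm_normalize_sub_le (G x) (norm_eq_of_mem_sphere _)
    linarith [dist_triangle_left (f x) e (normalizeMap G hG x), hGf x]
  refine ⟨normalizeMap G hG, homotopicRel_normalizeMap hG (fun x => (hGf x).trans (by norm_num))
    fun x hx => ?_, fun x hx h => ?_, hnear⟩
  · simp [G, cutoff, show f x = -e from hx, dist_neg_self_sphere]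
  · have hGg : G x = g x := by
      have := hnear x (by simp [h])
      simp [G, cutoff, min_eq_left (show 1 ≤ 2 - dist (f x) e by linarith)]
    refine hgrid x hx (Submodule.mem_span_singleton.2 ⟨‖G x‖, ?_⟩)
    rw [← h, ← hGg]
    exact NormedSpace.norm_smul_normalize (G x)

lemma gridDeformable_unitSphere {N : Type*} [Fintype N] [FiniteDimensional ℝ V]
    (hV : Fintype.card N < Module.finrank ℝ V) (b : sphere (0 : V) 1) : GridDeformable N b := by
  obtain ⟨e, rfl⟩ : ∃ e, b = -e := ⟨-b, (neg_neg b).symm⟩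
  refine ⟨{u | 1 < dist u e}, (isOpen_lt (by fun_prop) (by fun_prop)).mem_nhds
    (by simp [dist_neg_self_sphere]), fun k f => ?_⟩
  obtain ⟨f₁, hf₁, hne, hnear⟩ := exists_homotopicRel_ne_on_dyadicGrid hV e k f
  obtain ⟨r, hr, hfar⟩ := exists_pos_le_dist_of_isCompact (isClosed_dyadicGrid k).isCompact f₁ hne
  obtain ⟨p, hp, hpe⟩ := exists_homotopicRel_id_of_le_dist e (lt_min hr one_half_pos)
  refine ⟨p.comp f₁, hf₁.trans (homotopicRel_comp_right hp f₁ fun x hx => ?_),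
    fun x hx => hpe _ (min_le_of_left_le (hfar x hx)), fun x hx => hpe _ (min_le_of_right_le ?_)⟩
  · exact (hf₁.some.fst_eq_snd hx).symm.trans hx
  · exact not_lt.1 fun hlt => (hnear x hlt.le).not_gt hx

end Sphere

section Transport

lemma GridDeformable.of_homeomorph {N S T : Type*} [TopologicalSpace S] [TopologicalSpace T] {b : S}
    {c : T} (hb : GridDeformable N b) (h : S ≃ₜ T) (hbc : h b = c) : GridDeformable N c := by
  subst hbc
  obtain ⟨W, hW, hdef⟩ := hb
  refine ⟨h.symm ⁻¹' W, h.symm.continuous.continuousAt (by simpa using hW), fun e f => ?_⟩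
  obtain ⟨f', hrel, hgrid, hf'W⟩ := hdef e ((h.symm : C(T, S)).comp f)
  refine ⟨(h : C(S, T)).comp f', ?_, fun x hx => congrArg h (hgrid x hx),
    fun x hx => congrArg h (hf'W x hx)⟩
  convert hrel.comp_continuousMap (h : C(S, T)) using 1
  · ext x; simp
  · ext x; simp [h.symm_apply_eq]

/-- The homeomorphism `x ↦ r⁻¹ • (x - c)` of the sphere with centre `c` and radius `r` onto the
unit sphere. -/
def sphereHomeomorphUnitSphere {V : Type*} [NormedAddCommGroup V] [NormedSpace ℝ V] (c : V) {r : ℝ}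
    (hr : 0 < r) : Metric.sphere c r ≃ₜ Metric.sphere (0 : V) 1 :=
  ((Homeomorph.subRight c).trans (Homeomorph.smulOfNeZero r⁻¹ (inv_ne_zero hr.ne'))).subtype
    fun x => by
      simp [norm_smul, abs_of_pos hr, inv_mul_eq_div, div_eq_one_iff_eq hr.ne']

lemma gridDeformable_sphere {N V : Type*} [Fintype N] [NormedAddCommGroup V] [NormedSpace ℝ V]
    [FiniteDimensional ℝ V] (hV : Fintype.card N < Module.finrank ℝ V) {c : V} {r : ℝ} (hr : 0 < r)
    (b : Metric.sphere c r) : GridDeformable N b :=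
  (gridDeformable_unitSphere hV (sphereHomeomorphUnitSphere c hr b)).of_homeomorph
    (sphereHomeomorphUnitSphere c hr).symm (by simp)

end Transport

/-! ### Homotopy groups and dyadic subdivision -/

section InducedHom

variable {N X Y Z : Type*} [TopologicalSpace X] [TopologicalSpace Y] [TopologicalSpace Z] {x : X}
  {y : Y} {z : Z}

/-- The class of a generalized loop in the homotopy group. Typing it as an element of
`HomotopyGroup` rather than of a quotient makes the group structure available. -/
def loopClass (f : Ω^ N X x) : HomotopyGroup N X x := ⟦f⟧

lemma loopClass_surjective : Function.Surjective (loopClass : Ω^ N X x → HomotopyGroup N X x) :=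
  Quotient.exists_rep

lemma loopClass_eq_iff {f g : Ω^ N X x} :
    loopClass f = loopClass g ↔ f.1.HomotopicRel g.1 (Cube.boundary N) :=
  Quotient.eq

lemma piInduced_loopClass (φ : C(X, Y)) (hφ : φ x = y) (f : Ω^ N X x) :
    piInduced N φ hφ (loopClass f) = loopClass (GenLoop.compCM φ hφ f) :=
  rfl

lemma piInduced_piInduced {φ : C(X, Y)} (hφ : φ x = y) {ψ : C(Y, Z)} (hψ : ψ y = z) {χ : C(X, Z)}
    (hχ : χ x = z) (h : ψ.comp φ = χ) (γ : HomotopyGroup N X x) :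
    piInduced N ψ hψ (piInduced N φ hφ γ) = piInduced N χ hχ γ := by
  subst h
  obtain ⟨f, rfl⟩ := loopClass_surjective γ
  rfl

lemma piInduced_id (γ : HomotopyGroup N X x) :
    piInduced N (ContinuousMap.id X) (y := x) rfl γ = γ := by
  obtain ⟨f, rfl⟩ := loopClass_surjective γ
  rfl

variable [DecidableEq N]

lemma compCM_transAt (φ : C(X, Y)) (hφ : φ x = y) (i : N) (f g : Ω^ N X x) :
    GenLoop.compCM φ hφ (GenLoop.transAt i f g) =
      GenLoop.transAt i (GenLoop.compCM φ hφ f) (GenLoop.compCM φ hφ g) :=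
  GenLoop.ext _ _ fun _ => apply_ite φ _ _ _

variable [Nonempty N]

lemma loopClass_transAt (i : N) (f g : Ω^ N X x) :
    loopClass (GenLoop.transAt i f g) = loopClass g * loopClass f :=
  HomotopyGroup.mul_spec.symm

/-- `piInduced` as a group homomorphism. -/
def piHom (φ : C(X, Y)) (hφ : φ x = y) : HomotopyGroup N X x →* HomotopyGroup N Y y :=
  MonoidHom.mk' (piInduced N φ hφ) fun a b => by
    obtain ⟨f, rfl⟩ := loopClass_surjective a
    obtain ⟨g, rfl⟩ := loopClass_surjective b
    have i := Classical.arbitrary N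
    simp only [← loopClass_transAt i, piInduced_loopClass, compCM_transAt]

lemma piHom_apply (φ : C(X, Y)) (hφ : φ x = y) (γ : HomotopyGroup N X x) :
    piHom φ hφ γ = piInduced N φ hφ γ :=
  rfl

end InducedHom

section Halving

/-- The affine map of the unit interval onto its lower (`d = false`) or upper (`d = true`) half. -/
def halfInterval (d : Bool) (t : I) : I :=
  ⟨(t + d.toNat) / 2, by
    cases d <;> constructor <;> simp only [Bool.toNat_false, Bool.toNat_true] <;> push_cast <;>
      linarith [t.2.1, t.2.2]⟩

lemma coe_halfInterval (d : Bool) (t : I) : (halfInterval d t : ℝ) = (t + d.toNat) / 2 :=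
  rfl

variable {N X : Type*} [DecidableEq N] [TopologicalSpace X] {x : X}

/-- The affine map of the cube onto its lower (`d = false`) or upper (`d = true`) half in
direction `i`. -/
def halfMap (i : N) (d : Bool) : C(N → I, N → I) where
  toFun z := Function.update z i (halfInterval d (z i))
  continuous_toFun := continuous_id.update i (.subtype_mk (by fun_prop) _)

lemma halfMap_self (i : N) (d : Bool) (z : N → I) :
    halfMap i d z i = halfInterval d (z i) :=
  Function.update_self ..

lemma halfMap_of_ne {i j : N} (h : j ≠ i) (d : Bool) (z : N → I) : halfMap i d z j = z j :=
  Function.update_of_ne h ..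

/-- The restriction of a loop to one half of the cube, when the loop is trivial on the wall between
the two halves. -/
def halfLoop (f : Ω^ N X x) (i : N) (h : ∀ z : N → I, (z i : ℝ) = 1 / 2 → f z = x) (d : Bool) :
    Ω^ N X x :=
  ⟨f.1.comp (halfMap i d), by
    rintro z ⟨j, hj⟩
    change f (halfMap i d z) = x
    rcases eq_or_ne j i with rfl | hji
    · rcases hj with hj | hj <;> cases d
      · exact f.2 _ ⟨j, Or.inl (Subtype.ext (by simp [halfMap_self, coe_halfInterval, hj]))⟩
      · exact h _ (by simp [halfMap_self, coe_halfInterval, hj])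
      · exact h _ (by simp [halfMap_self, coe_halfInterval, hj])
      · exact f.2 _ ⟨j, Or.inr (Subtype.ext (by simp [halfMap_self, coe_halfInterval, hj]))⟩
    · exact f.2 _ ⟨j, by rwa [halfMap_of_ne hji]⟩⟩

lemma transAt_halfLoop (f : Ω^ N X x) (i : N) (h : ∀ z : N → I, (z i : ℝ) = 1 / 2 → f z = x) :
    GenLoop.transAt i (halfLoop f i h false) (halfLoop f i h true) = f := by
  have hupdate (d : Bool) (t : N → I) {s : I} (hs : halfInterval d s = t i) :
      halfMap i d (Function.update t i s) = t := by
    ext j : 1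
    rcases eq_or_ne j i with rfl | hj
    · rw [halfMap_self, Function.update_self, hs]
    · rw [halfMap_of_ne hj, Function.update_of_ne hj]
  refine GenLoop.ext _ _ fun t => ?_
  change ite _ _ _ = _
  split_ifs with ht
  · refine congrArg f (hupdate false t (Subtype.ext ?_))
    rw [coe_halfInterval, Set.projIcc_of_mem _ ⟨by linarith [(t i).2.1], by linarith⟩]
    simp
  · refine congrArg f (hupdate true t (Subtype.ext ?_))
    rw [coe_halfInterval, Set.projIcc_of_mem _ ⟨by linarith, by linarith [(t i).2.2]⟩]
    simp

end Halving

section DyadicCell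

variable {N : Type*}

/-- The closed dyadic box with lower corner `c i / 2 ^ e i` and side `2 ^ (-e i)` in
direction `i`. -/
def dyadicCell (e c : N → ℕ) : Set (N → I) :=
  {z | ∀ i, (c i : ℝ) ≤ 2 ^ e i * z i ∧ 2 ^ e i * z i ≤ (c i : ℝ) + 1}

lemma dyadicCell_zero : dyadicCell (0 : N → ℕ) 0 = Set.univ :=
  Set.eq_univ_of_forall fun z i => by simp [(z i).2.1, (z i).2.2]

lemma dist_le_of_mem_dyadicCell [Fintype N] {k : ℕ} {c : N → ℕ} {z w : N → I}
    (hz : z ∈ dyadicCell (fun _ => k) c) (hw : w ∈ dyadicCell (fun _ => k) c) :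
    dist z w ≤ (1 / 2) ^ k := by
  refine (dist_pi_le_iff (by positivity)).2 fun i => ?_
  rw [Subtype.dist_eq, Real.dist_eq, one_div_pow, le_div_iff₀' (by positivity),
    ← abs_of_pos (show (0 : ℝ) < 2 ^ k by positivity), ← abs_mul, abs_le]
  constructor <;> linarith [hz i, hw i]

lemma exists_dyadicCell_subset [Finite N] {𝒰 : Set (Set (N → I))} (hopen : ∀ U ∈ 𝒰, IsOpen U)
    (hcover : ⋃₀ 𝒰 = Set.univ) : ∃ k, ∀ c, ∃ U ∈ 𝒰, dyadicCell (fun _ => k) c ⊆ U := by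
  have := Fintype.ofFinite N
  obtain ⟨δ, hδ, hball⟩ :=
    lebesgue_number_lemma_of_metric_sUnion isCompact_univ hopen hcover.ge
  obtain ⟨k, hk⟩ := exists_pow_lt_of_lt_one hδ (one_half_lt_one (α := ℝ))
  refine ⟨k, fun c => ?_⟩
  rcases (dyadicCell (fun _ => k) c).eq_empty_or_nonempty with hempty | ⟨z, hz⟩
  · obtain ⟨U, hU, -⟩ := hball 0 (Set.mem_univ _)
    exact ⟨U, hU, hempty ▸ Set.empty_subset U⟩
  · obtain ⟨U, hU, hzU⟩ := hball z (Set.mem_univ _)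
    exact ⟨U, hU, fun w hw => hzU ((dist_le_of_mem_dyadicCell hw hz).trans_lt hk)⟩

variable [DecidableEq N] (e : N → ℕ) (i : N)

lemma mem_dyadicGrid_of_apply_eq_half {z : N → I} (hz : (z i : ℝ) = 1 / 2) :
    z ∈ dyadicGrid (e + Pi.single i 1) :=
  ⟨i, 2 ^ e i, by rw [hz, Pi.add_apply, Pi.single_eq_same, pow_succ]; push_cast; ring⟩

lemma halfMap_mem_dyadicGrid (d : Bool) {z : N → I} (hz : z ∈ dyadicGrid e) :
    halfMap i d z ∈ dyadicGrid (e + Pi.single i 1) := by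
  obtain ⟨j, c, hz⟩ := hz
  refine ⟨j, c + (Pi.single i (d.toNat * 2 ^ e i) : N → ℕ) j, ?_⟩
  rcases eq_or_ne j i with rfl | hj
  · simp only [halfMap_self, coe_halfInterval, Pi.add_apply, Pi.single_eq_same, pow_succ]
    push_cast
    linarith
  · simpa [halfMap_of_ne hj, hj] using hz

lemma mapsTo_halfMap_dyadicCell (d : Bool) (c : N → ℕ) :
    Set.MapsTo (halfMap i d) (dyadicCell e c)
      (dyadicCell (e + Pi.single i 1) (c + Pi.single i (d.toNat * 2 ^ e i))) := by
  intro z hz j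
  rcases eq_or_ne j i with rfl | hj
  · simp only [halfMap_self, coe_halfInterval, Pi.add_apply, Pi.single_eq_same, pow_succ]
    push_cast
    constructor <;> linarith [hz j]
  · simpa [halfMap_of_ne hj, hj] using hz j

/-- A loop that is trivial on a dyadic grid is the product, in any order of the successive halvings,
of its restrictions to the cells. -/
lemma loopClass_induction_dyadicCell [Finite N] [Nonempty N] {X : Type*} [TopologicalSpace X]
    {x : X} {P : HomotopyGroup N X x → Prop} (hmul : ∀ a b, P a → P b → P (a * b))
    {𝒜 : Set (Set X)} (h𝒜 : ∀ A ∈ 𝒜, ∀ f : Ω^ N X x, (∀ z, f z ∈ A) → P (loopClass f))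
    (e : N → ℕ) (f : Ω^ N X x) (hgrid : ∀ z ∈ dyadicGrid e, f z = x)
    (hcell : ∀ c, ∃ A ∈ 𝒜, Set.MapsTo f (dyadicCell e c) A) : P (loopClass f) := by
  have := Fintype.ofFinite N
  induction hn : ∑ i, e i generalizing e f with
  | zero =>
    obtain rfl : e = 0 := funext (by simpa using hn)
    obtain ⟨A, hA, hfA⟩ := hcell 0
    exact h𝒜 A hA f fun z => hfA (dyadicCell_zero ▸ Set.mem_univ z)
  | succ n ih =>
    obtain ⟨i, -, hi⟩ : ∃ i ∈ Finset.univ, e i ≠ 0 :=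
      Finset.exists_ne_zero_of_sum_ne_zero (hn ▸ n.succ_ne_zero)
    obtain ⟨e, rfl⟩ : ∃ e', e = e' + Pi.single i 1 :=
      ⟨e - Pi.single i 1, funext fun j => by
        rcases eq_or_ne j i with rfl | hj <;> simp [*, Nat.sub_add_cancel, Nat.one_le_iff_ne_zero]⟩
    have hwall (z : N → I) (hz : (z i : ℝ) = 1 / 2) : f z = x :=
      hgrid z (mem_dyadicGrid_of_apply_eq_half e i hz)
    have hhalf (d : Bool) : P (loopClass (halfLoop f i hwall d)) := by
      refine ih e _ (fun z hz => hgrid _ (halfMap_mem_dyadicGrid e i d hz)) (fun c => ?_)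
        (by simpa [Finset.sum_add_distrib] using hn)
      obtain ⟨A, hA, hfA⟩ := hcell (c + Pi.single i (d.toNat * 2 ^ e i))
      exact ⟨A, hA, hfA.comp (mapsTo_halfMap_dyadicCell e i d c)⟩
    rw [← transAt_halfLoop f i hwall, loopClass_transAt]
    exact hmul _ _ (hhalf true) (hhalf false)

end DyadicCell

/-! ### Shrinking wedges -/

/-- The shrinking wedge of the pointed spaces `(S j, b j)`: the families with at most one entry
different from the base point, with the topology of a subspace of the product. -/
abbrev ShrinkingWedge {ι : Type*} {S : ι → Type*} (b : ∀ j, S j) : Type _ :=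
  {s : ∀ j, S j // Pairwise fun j k => s j = b j ∨ s k = b k}

namespace ShrinkingWedge

section Basic

variable {ι : Type*} {S : ι → Type*} [∀ j, TopologicalSpace (S j)] {b : ∀ j, S j}

variable (b) in
/-- The base point of the wedge. -/
def basePt : ShrinkingWedge b :=
  ⟨b, fun _ _ _ => Or.inl rfl⟩

/-- The collapse of the wedge onto its `j`-th summand. -/
def coord (j : ι) : C(ShrinkingWedge b, S j) :=
  ⟨fun s => s.1 j, (continuous_apply j).comp continuous_subtype_val⟩

lemma ext_coord {s t : ShrinkingWedge b} (h : ∀ j, coord j s = coord j t) : s = t :=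
  Subtype.ext (funext h)

lemma coord_basePt (j : ι) : coord j (basePt b) = b j :=
  rfl

lemma coord_eq_or_coord_eq (s : ShrinkingWedge b) {j k : ι} (hjk : j ≠ k) :
    coord j s = b j ∨ coord k s = b k :=
  s.2 hjk

lemma exists_forall_ne_coord_eq [Nonempty ι] (s : ShrinkingWedge b) :
    ∃ k, ∀ j ≠ k, coord j s = b j := by
  by_cases h : ∃ k, coord k s ≠ b k
  · obtain ⟨k, hk⟩ := h
    exact ⟨k, fun j hj => (coord_eq_or_coord_eq s hj).resolve_right hk⟩
  · push Not at h
    exact ⟨Classical.arbitrary ι, fun j _ => h j⟩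

/-- The map to the wedge with given coordinates. -/
def lift {X : Type*} [TopologicalSpace X] (g : ∀ j, C(X, S j))
    (hg : ∀ x, Pairwise fun j k => g j x = b j ∨ g k x = b k) : C(X, ShrinkingWedge b) :=
  ⟨fun x => ⟨fun j => g j x, hg x⟩, by fun_prop⟩

/-- The inclusion of the `j`-th summand. -/
def single [DecidableEq ι] (j : ι) : C(S j, ShrinkingWedge b) where
  toFun u := ⟨Function.update b j u, fun k l hkl => by
    rcases eq_or_ne k j with rfl | hk
    · exact Or.inr (Function.update_of_ne hkl.symm ..)
    · exact Or.inl (Function.update_of_ne hk ..)⟩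
  continuous_toFun := (continuous_const.update j continuous_id).subtype_mk _

open Classical in
/-- The retraction of the wedge onto the wedge of the summands with index in `A`. -/
def restrict (A : Set ι) : C(ShrinkingWedge b, ShrinkingWedge b) :=
  lift (fun j => if j ∈ A then coord j else .const _ (b j)) fun s j k hjk => by
    rcases coord_eq_or_coord_eq s hjk with h | h
    · left; split_ifs <;> simp [h]
    · right; split_ifs <;> simp [h]

lemma coord_restrict_of_mem {A : Set ι} {j : ι} (hj : j ∈ A) (s : ShrinkingWedge b) :
    coord j (restrict A s) = coord j s :=
  DFunLike.congr_fun (if_pos hj : _ = coord j) s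

lemma coord_restrict_of_notMem {A : Set ι} {j : ι} (hj : j ∉ A) (s : ShrinkingWedge b) :
    coord j (restrict A s) = b j :=
  DFunLike.congr_fun (if_neg hj : _ = ContinuousMap.const _ (b j)) s

lemma restrict_basePt (A : Set ι) : restrict A (basePt b) = basePt b := by
  refine ext_coord fun j => ?_
  by_cases hj : j ∈ A
  · exact coord_restrict_of_mem hj _
  · exact coord_restrict_of_notMem hj _

lemma restrict_eq_self {A : Set ι} {s : ShrinkingWedge b} (h : ∀ j ∉ A, coord j s = b j) :
    restrict A s = s := by
  refine ext_coord fun j => ?_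
  by_cases hj : j ∈ A
  · exact coord_restrict_of_mem hj s
  · rw [coord_restrict_of_notMem hj, h j hj]

lemma restrict_comp_restrict (A B : Set ι) :
    (restrict A).comp (restrict B) = restrict (b := b) (A ∩ B) := by
  refine ContinuousMap.ext fun s => ext_coord fun j => ?_
  rw [ContinuousMap.comp_apply]
  by_cases hA : j ∈ A
  · rw [coord_restrict_of_mem hA]
    by_cases hB : j ∈ B
    · rw [coord_restrict_of_mem hB, coord_restrict_of_mem (Set.mem_inter hA hB)]
    · rw [coord_restrict_of_notMem hB, coord_restrict_of_notMem fun h => hB h.2]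
  · rw [coord_restrict_of_notMem hA, coord_restrict_of_notMem fun h => hA h.1]

lemma restrict_empty (s : ShrinkingWedge b) : restrict ∅ s = basePt b :=
  ext_coord fun j => coord_restrict_of_notMem (Set.notMem_empty j) s

lemma single_comp_coord [DecidableEq ι] (j : ι) :
    (single j).comp (coord j) = restrict (b := b) {j} := by
  refine ContinuousMap.ext fun s => ext_coord fun k => ?_
  rcases eq_or_ne k j with rfl | hk
  · rw [coord_restrict_of_mem (Set.mem_singleton k)]
    exact Function.update_self (f := b) k _
  · rw [coord_restrict_of_notMem (Set.mem_singleton_iff.not.2 hk)]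
    exact Function.update_of_ne (f := b) hk _

lemma single_base [DecidableEq ι] (j : ι) : single j (b j) = basePt b :=
  Subtype.ext (Function.update_eq_self j b)

lemma exists_homotopicRel_of_coord {X : Type*} [TopologicalSpace X] (f : C(X, ShrinkingWedge b))
    (g : ∀ j, C(X, S j))
    (h : ∀ j, ((coord j).comp f).HomotopicRel (g j) ((coord j).comp f ⁻¹' {b j})) :
    ∃ f', f.HomotopicRel f' (f ⁻¹' {basePt b}) ∧ ∀ j x, coord j (f' x) = g j x := by
  let H (j) := (h j).some
  have hH {j x} (t) (hx : coord j (f x) = b j) : H j (t, x) = b j :=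
    ((H j).eq_fst t hx).trans hx
  have hg {j x} (hx : coord j (f x) = b j) : g j x = b j := by
    rw [← (H j).apply_one]
    exact hH 1 hx
  refine ⟨lift g fun x j k hjk => (coord_eq_or_coord_eq (f x) hjk).imp hg hg,
    ⟨⟨⟨lift (fun j => (H j).toContinuousMap) fun p j k hjk =>
      (coord_eq_or_coord_eq (f p.2) hjk).imp (hH p.1) (hH p.1), fun x => ?_, fun x => ?_⟩,
      fun t x hx => ?_⟩⟩, fun j x => rfl⟩
  · exact ext_coord fun j => (H j).apply_zero x
  · exact ext_coord fun j => (H j).apply_one x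
  · refine ext_coord fun j => ?_
    have hx : f x = basePt b := hx
    exact (H j).eq_fst t (congrArg (coord j) hx)

end Basic

section Splitting

variable {N ι : Type*} {S : ι → Type*} [∀ j, TopologicalSpace (S j)] {b : ∀ j, S j}

/-- Deform all coordinates simultaneously to be trivial on a dyadic grid, so fine that on each of
its cells either coordinate `j` is the only nontrivial one or coordinate `j` is close to the base
point, and hence at the base point after the deformation. -/
lemma exists_loopClass_eq_forall_mapsTo_dyadicCell [Finite N] (hb : ∀ j, GridDeformable N (b j))
    (j : ι) [T1Space (S j)] (f : Ω^ N (ShrinkingWedge b) (basePt b)) :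
    ∃ f' : Ω^ N (ShrinkingWedge b) (basePt b), loopClass f = loopClass f' ∧ ∃ k : ℕ,
      (∀ z ∈ dyadicGrid fun _ => k, f' z = basePt b) ∧
      ∀ c, ∃ A ∈ ({{s | restrict {j} s = s}, {s | restrict {j}ᶜ s = s}} :
        Set (Set (ShrinkingWedge b))), Set.MapsTo f' (dyadicCell (fun _ => k) c) A := by
  choose W hW hdef using hb
  obtain ⟨k, hk⟩ : ∃ k, ∀ c, ∃ U ∈ ({{z | coord j (f z) ≠ b j},
      {z | coord j (f z) ∈ interior (W j)}} : Set (Set (N → I))),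
      dyadicCell (fun _ => k) c ⊆ U := by
    have hcont : Continuous fun z => coord j (f z) := (coord j).continuous.comp f.1.continuous
    refine exists_dyadicCell_subset ?_ (Set.eq_univ_of_forall fun z => ?_)
    · rintro U (rfl | rfl)
      · exact isOpen_compl_singleton.preimage hcont
      · exact isOpen_interior.preimage hcont
    · rw [Set.sUnion_pair]
      exact (ne_or_eq (coord j (f z)) (b j)).imp_right fun h => by
        simpa [h] using mem_interior_iff_mem_nhds.2 (hW j)
  choose g hfg hgrid hgW using fun l => hdef l (fun _ => k) ((coord l).comp f.1)
  have hg {l z} (hz : coord l (f z) = b l) : g l z = b l :=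
    ((hfg l).some.fst_eq_snd hz).symm.trans hz
  obtain ⟨f', hff', hf'⟩ := exists_homotopicRel_of_coord f.1 g hfg
  refine ⟨⟨f', fun z hz => (hff'.some.fst_eq_snd (f.2 z hz)).symm.trans (f.2 z hz)⟩,
    loopClass_eq_iff.2 (homotopicRel_comp_right hff' (.id _) f.2), k,
    fun z hz => ext_coord fun l => (hf' l z).trans (hgrid l z hz), fun c => ?_⟩
  obtain ⟨U, rfl | rfl, hU⟩ := hk c
  · refine ⟨_, Or.inl rfl, fun z hz => restrict_eq_self fun l hl => (hf' l z).trans ?_⟩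
    exact hg ((coord_eq_or_coord_eq (f z) hl).resolve_right (hU hz))
  · refine ⟨_, Or.inr rfl, fun z hz => restrict_eq_self fun l hl => (hf' l z).trans ?_⟩
    obtain rfl : l = j := not_not.1 hl
    exact hgW l z (interior_subset (hU hz))

variable [DecidableEq N] [Nontrivial N]

lemma piHom_restrict_loopClass {A : Set ι} {f : Ω^ N (ShrinkingWedge b) (basePt b)}
    (hf : ∀ z, restrict A (f z) = f z) :
    piHom (restrict A) (restrict_basePt A) (loopClass f) = loopClass f :=
  congrArg loopClass (GenLoop.ext _ _ hf)

lemma piHom_restrict_compl_loopClass {A : Set ι} {f : Ω^ N (ShrinkingWedge b) (basePt b)}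
    (hf : ∀ z, restrict A (f z) = f z) :
    piHom (restrict Aᶜ) (restrict_basePt Aᶜ) (loopClass f) = 1 := by
  refine congrArg loopClass (GenLoop.ext _ GenLoop.const fun z => ?_)
  change restrict Aᶜ (f z) = basePt b
  rw [← hf z, ← ContinuousMap.comp_apply, restrict_comp_restrict, Set.compl_inter_self,
    restrict_empty]

theorem piHom_restrict_mul_piHom_restrict_compl [Finite N] (hb : ∀ j, GridDeformable N (b j))
    (j : ι) [T1Space (S j)] (γ : HomotopyGroup N (ShrinkingWedge b) (basePt b)) :
    piHom (restrict {j}) (restrict_basePt _) γ * piHom (restrict {j}ᶜ) (restrict_basePt _) γ =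
      γ := by
  obtain ⟨f, rfl⟩ := loopClass_surjective γ
  obtain ⟨f', hff', k, hgrid, hcell⟩ := exists_loopClass_eq_forall_mapsTo_dyadicCell hb j f
  rw [hff']
  refine loopClass_induction_dyadicCell
    (P := fun a => piHom (restrict {j}) (restrict_basePt _) a *
      piHom (restrict {j}ᶜ) (restrict_basePt _) a = a)
    (fun a c ha hc => ?_) ?_ (fun _ => k) f' hgrid hcell
  · rw [map_mul, map_mul, mul_mul_mul_comm, ha, hc]
  · rintro A (rfl | rfl) h hh
    · rw [piHom_restrict_loopClass hh, piHom_restrict_compl_loopClass hh, mul_one]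
    · have h1 := piHom_restrict_compl_loopClass hh
      simp only [compl_compl] at h1
      rw [h1, piHom_restrict_loopClass hh, one_mul]

lemma piInduced_restrict_compl_eq_self [Finite N] (hb : ∀ j, GridDeformable N (b j))
    (j : ι) [T1Space (S j)] {γ : HomotopyGroup N (ShrinkingWedge b) (basePt b)}
    (hγ : piInduced N (coord j) (coord_basePt j) γ = 1) :
    piInduced N (restrict {j}ᶜ) (restrict_basePt _) γ = γ := by
  classical
  have h1 : piHom (restrict {j}) (restrict_basePt _) γ = 1 := by
    rw [piHom_apply, ← piInduced_piInduced (coord_basePt j) (single_base j) _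
      (single_comp_coord j), hγ, ← piHom_apply, map_one]
  simpa [h1, piHom_apply] using piHom_restrict_mul_piHom_restrict_compl hb j γ

end Splitting

section InfiniteConcatenation

variable {X Y Z : Type*} [TopologicalSpace X] [TopologicalSpace Y] {A : Set Y}

/-- The concatenation of the first `d` homotopies of a sequence, the first of them occupying the
first half of the time interval. -/
def concatHomotopyRel : ∀ (d : ℕ) (f : ℕ → C(Y, X))
    (_ : ∀ k, ContinuousMap.HomotopyRel (f k) (f (k + 1)) A),
    ContinuousMap.HomotopyRel (f 0) (f d) A
  | 0, f, _ => .refl (f 0) A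
  | d + 1, f, H => (H 0).trans (concatHomotopyRel d (fun k => f (k + 1)) fun k => H (k + 1))

lemma apply_concatHomotopyRel_eq {π : X → Z} {c : Z} (d : ℕ) {f : ℕ → C(Y, X)}
    {H : ∀ k, ContinuousMap.HomotopyRel (f k) (f (k + 1)) A} (hH : ∀ k p, π (H k p) = c)
    (p : I × Y) : π (concatHomotopyRel d f H p) = c := by
  induction d generalizing f p with
  | zero =>
    change π (f 0 p.2) = c
    rw [← (H 0).apply_zero]
    exact hH 0 _
  | succ d ih =>
    rw [concatHomotopyRel, ContinuousMap.HomotopyRel.trans_apply]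
    split_ifs
    · exact hH 0 _
    · exact ih (fun k => hH (k + 1)) _

lemma apply_concatHomotopyRel_add {π : X → Z} {c : Z} (d m : ℕ) {f : ℕ → C(Y, X)}
    {H : ∀ k, ContinuousMap.HomotopyRel (f k) (f (k + 1)) A} (hH : ∀ k ≥ d, ∀ p, π (H k p) = c)
    (p : I × Y) : π (concatHomotopyRel (d + m) f H p) = π (concatHomotopyRel d f H p) := by
  induction d generalizing f p with
  | zero =>
    have hH (k p) : π (H k p) = c := hH k k.zero_le p
    rw [apply_concatHomotopyRel_eq _ hH, apply_concatHomotopyRel_eq _ hH]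
  | succ d ih =>
    rw [Nat.add_right_comm, concatHomotopyRel, concatHomotopyRel,
      ContinuousMap.HomotopyRel.trans_apply, ContinuousMap.HomotopyRel.trans_apply]
    split_ifs
    · rfl
    · exact ih (fun k hk => hH (k + 1) (Nat.succ_le_succ hk)) _

end InfiniteConcatenation

section Injectivity

variable {S : ℕ → Type*} [∀ j, TopologicalSpace (S j)] {b : ∀ j, S j}

/-- The infinite concatenation is continuous because its `j`-th coordinate is already that of the
concatenation of the first `j + 1` homotopies. -/
lemma homotopicRel_const_of_forall_coord_eq {Y : Type*} [TopologicalSpace Y] {A : Set Y}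
    {f : ℕ → C(Y, ShrinkingWedge b)} (H : ∀ k, ContinuousMap.HomotopyRel (f k) (f (k + 1)) A)
    (hH : ∀ k, ∀ j < k, ∀ p, coord j (H k p) = b j) :
    (f 0).HomotopicRel (.const Y (basePt b)) A := by
  have hstable {j d} (hd : j < d) (p) :
      coord j (concatHomotopyRel (j + 1) f H p) = coord j (concatHomotopyRel d f H p) := by
    obtain ⟨m, rfl⟩ := Nat.exists_eq_add_of_le hd
    exact (apply_concatHomotopyRel_add (π := coord j) (c := b j) (j + 1) m
      (fun k hk => hH k j hk) p).symm
  let L : C(I × Y, ShrinkingWedge b) :=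
    lift (fun j => (coord j).comp (concatHomotopyRel (j + 1) f H).toContinuousMap)
      fun p j k hjk => by
        have hj := hstable (j.lt_succ_of_le (le_max_left j k)) p
        have hk := hstable (k.lt_succ_of_le (le_max_right j k)) p
        have := coord_eq_or_coord_eq (concatHomotopyRel (max j k + 1) f H p) hjk
        rwa [← hj, ← hk] at this
  refine ⟨⟨⟨L, fun y => ext_coord fun j => ?_, fun y => ext_coord fun j => ?_⟩,
    fun t y hy => ext_coord fun j => ?_⟩⟩
  · change coord j (concatHomotopyRel (j + 1) f H (0, y)) = coord j (f 0 y)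
    rw [(concatHomotopyRel (j + 1) f H).apply_zero]
  · refine (congrArg (coord j) ((concatHomotopyRel (j + 1) f H).apply_one y)).trans ?_
    rw [← (H (j + 1)).apply_zero]
    exact hH (j + 1) j j.lt_succ_self _
  · change coord j (concatHomotopyRel (j + 1) f H (t, y)) = coord j (f 0 y)
    rw [(concatHomotopyRel (j + 1) f H).eq_fst t hy]

variable {N : Type*} [Nontrivial N]

lemma piInduced_restrict_Ici_succ [DecidableEq N] [Finite N] [∀ j, T1Space (S j)]
    (hb : ∀ j, GridDeformable N (b j)) (k : ℕ)
    {γ : HomotopyGroup N (ShrinkingWedge b) (basePt b)}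
    (hγ : piInduced N (coord k) (coord_basePt k) γ = 1) :
    piInduced N (restrict (Set.Ici k)) (restrict_basePt _) γ =
      piInduced N (restrict (Set.Ici (k + 1))) (restrict_basePt _) γ := by
  have hinter : Set.Ici k ∩ {k}ᶜ = Set.Ici (k + 1) := by
    ext j
    simp only [Set.mem_inter_iff, Set.mem_Ici, Set.mem_compl_iff, Set.mem_singleton_iff]
    omega
  conv_lhs => rw [← piInduced_restrict_compl_eq_self hb k hγ]
  exact piInduced_piInduced _ _ _ (by rw [restrict_comp_restrict, hinter]) γ

lemma loopClass_eq_one_of_forall_restrict_Ici [DecidableEq N]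
    {f : Ω^ N (ShrinkingWedge b) (basePt b)} (h : ∀ k,
      piInduced N (restrict (Set.Ici k)) (restrict_basePt _) (loopClass f) =
        piInduced N (restrict (Set.Ici (k + 1))) (restrict_basePt _) (loopClass f)) :
    loopClass f = 1 := by
  let r (k : ℕ) : C(ShrinkingWedge b, ShrinkingWedge b) := restrict (Set.Ici k)
  have hr (k l) (hkl : k ≤ l) : (r k).comp ((r l).comp f.1) = (r l).comp f.1 := by
    rw [← ContinuousMap.comp_assoc, restrict_comp_restrict,
      Set.inter_eq_right.2 (Set.Ici_subset_Ici.2 hkl)]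
  have H (k) : ContinuousMap.HomotopyRel ((r k).comp f.1) ((r (k + 1)).comp f.1)
      (Cube.boundary N) := (loopClass_eq_iff.1 (h k)).some
  have hnull := homotopicRel_const_of_forall_coord_eq
    (fun k => ((H k).compContinuousMap (r k)).cast (hr k k le_rfl) (hr k (k + 1) k.le_succ))
    fun k j hj p => coord_restrict_of_notMem (not_le.2 hj) _
  have hr0 : (r 0).comp f.1 = f.1 :=
    ContinuousMap.ext fun z => restrict_eq_self fun j hj => absurd j.zero_le hj
  rw [hr0] at hnull
  exact loopClass_eq_iff.2 hnull

theorem injective_piInduced_coord [Finite N] [∀ j, T1Space (S j)]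
    (hb : ∀ j, GridDeformable N (b j)) :
    Function.Injective fun (γ : HomotopyGroup N (ShrinkingWedge b) (basePt b)) j =>
      piInduced N (coord j) (coord_basePt j) γ := by
  classical
  refine (injective_iff_map_eq_one
    (MonoidHom.pi fun j => piHom (N := N) (coord (b := b) j) (coord_basePt j))).2 fun γ hγ => ?_
  obtain ⟨f, rfl⟩ := loopClass_surjective γ
  exact loopClass_eq_one_of_forall_restrict_Ici fun k =>
    piInduced_restrict_Ici_succ hb k (congrFun hγ k)

end Injectivity

section Sum

variable {E : Type*} [NormedAddCommGroup E] {T : ℕ → Set E} {b : ∀ j, T j}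

lemma tsum_coord_eq (hb : ∀ j, (b j : E) = 0) {s : ShrinkingWedge b} {k : ℕ}
    (hs : ∀ j ≠ k, coord j s = b j) : ∑' j, (coord j s : E) = coord k s :=
  tsum_eq_single k fun j hj => by rw [hs j hj, hb]

lemma continuous_tsum_coord (hb : ∀ j, (b j : E) = 0) {u : ℕ → ℝ}
    (hu : Filter.Tendsto u Filter.atTop (𝓝 0)) (hT : ∀ j, ∀ x ∈ T j, ‖x‖ ≤ u j) :
    Continuous fun s : ShrinkingWedge b => ∑' j, (coord j s : E) := by
  have hlim : TendstoUniformly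
      (fun J (s : ShrinkingWedge b) => ∑ j ∈ Finset.range J, (coord j s : E))
      (fun s => ∑' j, (coord j s : E)) Filter.atTop := by
    refine Metric.tendstoUniformly_iff.2 fun ε hε => ?_
    obtain ⟨J₀, hJ₀⟩ := Filter.eventually_atTop.1 (hu.eventually_lt_const hε)
    filter_upwards [Filter.eventually_ge_atTop J₀] with J hJ s
    obtain ⟨k, hk⟩ := exists_forall_ne_coord_eq s
    have hzero (j) (hj : j ≠ k) : (coord j s : E) = 0 := by rw [hk j hj, hb]
    rw [tsum_coord_eq hb hk]
    by_cases hkJ : k < J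
    · rwa [Finset.sum_eq_single_of_mem k (Finset.mem_range.2 hkJ) fun j _ => hzero j, dist_self]
    · rw [Finset.sum_eq_zero fun j hj => hzero j (by grind), dist_zero_right]
      exact (hT k _ (coord k s).2).trans_lt (hJ₀ k (hJ.trans (not_lt.1 hkJ)))
  refine hlim.continuous (.of_forall fun J => continuous_finsetSum _ fun j _ => ?_)
  exact continuous_subtype_val.comp (coord j).continuous

end Sum

end ShrinkingWedge

/-! ### The Hawaiian earring -/

section HawaiianEarring

open ShrinkingWedge

variable {n : ℕ}

lemma mem_hawSphere_iff {j : ℕ} {z : EuclideanSpace ℝ (Fin (n + 1))} :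
    z ∈ hawSphere n j ↔ ‖z‖ ^ 2 = 2 / j * z 0 := by
  have hj : (0 : ℝ) ≤ 1 / j := by positivity
  rw [hawSphere, mem_sphere_iff_norm, ← sq_eq_sq₀ (norm_nonneg _) hj, norm_sub_sq_real,
    EuclideanSpace.inner_single_right, PiLp.norm_single, Real.norm_of_nonneg hj]
  simp only [conj_trivial]
  constructor <;> intro h <;> linear_combination h

lemma eq_zero_of_mem_hawSphere_of_mem_hawSphere {j k : ℕ} (hjk : j ≠ k)
    {z : EuclideanSpace ℝ (Fin (n + 1))} (hj : z ∈ hawSphere n j) (hk : z ∈ hawSphere n k) :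
    z = 0 := by
  rw [mem_hawSphere_iff] at hj hk
  have hne : (2 : ℝ) / j ≠ 2 / k := by
    simpa [div_eq_mul_inv] using hjk
  have hz0 : z 0 = 0 := by
    by_contra h
    exact hne (mul_right_cancel₀ h (hj.symm.trans hk))
  simpa [hz0] using hj

lemma norm_le_of_mem_hawSphere {j : ℕ} {z : EuclideanSpace ℝ (Fin (n + 1))}
    (hz : z ∈ hawSphere n j) : ‖z‖ ≤ 2 / j := by
  have := dist_triangle_right z 0 (EuclideanSpace.single (0 : Fin (n + 1)) ((1 : ℝ) / j))
  rw [dist_zero_right, Metric.mem_sphere.1 hz, Metric.mem_sphere.1 (zero_mem_hawSphere n j)] at this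
  exact this.trans_eq (by ring)

lemma exists_mem_hawSphere_succ (z : hawaiian n) :
    ∃ k : ℕ, (z : EuclideanSpace ℝ (Fin (n + 1))) ∈ hawSphere n (k + 1) := by
  obtain ⟨j, hj, hz⟩ := Set.mem_iUnion₂.1 z.2
  obtain ⟨k, rfl⟩ := Nat.exists_eq_add_of_le' hj
  exact ⟨k, hz⟩

variable (n) in
/-- The base point of a sphere of the earring. -/
def hawSpherePt (j : ℕ) : hawSphere n j :=
  ⟨0, zero_mem_hawSphere n j⟩

open Classical in
lemma continuous_ite_mem_hawSphere (i j : ℕ) :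
    Continuous fun z : Ysub n i =>
      if (z : EuclideanSpace ℝ (Fin (n + 1))) ∈ hawSphere n j
      then (z : EuclideanSpace ℝ (Fin (n + 1))) else 0 := by
  refine (locallyFinite_of_finite fun k : Finset.Icc 1 i =>
    {z : Ysub n i | (z : EuclideanSpace ℝ (Fin (n + 1))) ∈ hawSphere n k}).continuous ?_
    (fun k => Metric.isClosed_sphere.preimage continuous_subtype_val) fun k => ?_
  · refine Set.eq_univ_of_forall fun z => ?_
    obtain ⟨k, hk, hz⟩ := Set.mem_iUnion₂.1 z.2
    exact Set.mem_iUnion.2 ⟨⟨k, hk⟩, hz⟩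
  · rcases eq_or_ne (k : ℕ) j with hkj | hkj
    · exact continuous_subtype_val.continuousOn.congr fun z hz => if_pos (hkj ▸ hz)
    · refine (continuousOn_const (c := 0)).congr fun z hz => ite_eq_right_iff.2 fun hzj => ?_
      exact eq_zero_of_mem_hawSphere_of_mem_hawSphere hkj hz hzj

open Classical in
lemma ite_mem_hawSphere {j : ℕ} {z : EuclideanSpace ℝ (Fin (n + 1))} :
    (if z ∈ hawSphere n j then z else 0) ∈ hawSphere n j := by
  split_ifs with hz
  exacts [hz, zero_mem_hawSphere n j]

open Classical in
/-- The collapse of `Ysub n i` onto its `j`-th sphere. -/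
def YsubCollapse (i j : ℕ) : C(Ysub n i, hawSphere n j) where
  toFun z := ⟨if (z : EuclideanSpace ℝ (Fin (n + 1))) ∈ hawSphere n j then z else 0,
    ite_mem_hawSphere⟩
  continuous_toFun := (continuous_ite_mem_hawSphere i j).subtype_mk _

lemma coe_YsubCollapse_of_mem {i j : ℕ} {z : Ysub n i}
    (hz : (z : EuclideanSpace ℝ (Fin (n + 1))) ∈ hawSphere n j) :
    (YsubCollapse i j z : EuclideanSpace ℝ (Fin (n + 1))) = z :=
  if_pos hz

lemma YsubCollapse_YsubPt (i j : ℕ) : YsubCollapse (i + 1) j (YsubPt n i) = hawSpherePt n j :=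
  Subtype.ext (coe_YsubCollapse_of_mem (zero_mem_hawSphere n j))

lemma YsubCollapse_of_mem_of_ne {i j k : ℕ} (hjk : k ≠ j) {z : Ysub n i}
    (hz : (z : EuclideanSpace ℝ (Fin (n + 1))) ∈ hawSphere n k) :
    YsubCollapse i j z = hawSpherePt n j := by
  by_cases h : (z : EuclideanSpace ℝ (Fin (n + 1))) ∈ hawSphere n j
  · exact Subtype.ext ((coe_YsubCollapse_of_mem h).trans
      (eq_zero_of_mem_hawSphere_of_mem_hawSphere hjk hz h))
  · exact Subtype.ext (if_neg h)

variable (n) in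
/-- The map from the shrinking wedge of the spheres `hawSphere n (j + 1)` to the earring that
restricts to the inclusion on each of the spheres. -/
def ofWedge : C(ShrinkingWedge fun j => hawSpherePt n (j + 1), hawaiian n) where
  toFun s := ⟨∑' j, (coord j s : EuclideanSpace ℝ (Fin (n + 1))), by
    obtain ⟨k, hk⟩ := exists_forall_ne_coord_eq s
    rw [tsum_coord_eq (fun _ => rfl) hk]
    exact Set.mem_biUnion (Set.mem_ofPred.2 k.succ_pos) (coord k s).2⟩
  continuous_toFun := by
    refine (continuous_tsum_coord (fun _ => rfl) (u := fun j => 2 / ((j + 1 : ℕ) : ℝ)) ?_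
      fun j x => norm_le_of_mem_hawSphere).subtype_mk _
    exact (tendsto_const_div_atTop_nhds_zero_nat 2).comp (Filter.tendsto_add_atTop_nat 1)

lemma ofWedge_basePt : ofWedge n (basePt _) = hawaiianPt n :=
  Subtype.ext (tsum_coord_eq (k := 0) (fun _ => rfl) fun _ _ => rfl)

section Retraction

variable {R : ∀ i : ℕ, C(hawaiian n, Ysub n (i + 1))}
  (hRfix : ∀ (i : ℕ) (z : hawaiian n), (z : EuclideanSpace ℝ (Fin (n + 1))) ∈ Ysub n (i + 1) →
    (R i z : EuclideanSpace ℝ (Fin (n + 1))) = z)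
  (hRcoll : ∀ i j : ℕ, i + 1 < j → ∀ z : hawaiian n,
    (z : EuclideanSpace ℝ (Fin (n + 1))) ∈ hawSphere n j →
    (R i z : EuclideanSpace ℝ (Fin (n + 1))) = 0)

include hRfix in
lemma coe_YsubCollapse_retraction {k : ℕ} {z : hawaiian n}
    (hz : (z : EuclideanSpace ℝ (Fin (n + 1))) ∈ hawSphere n (k + 1)) :
    (YsubCollapse (k + 1) (k + 1) (R k z) : EuclideanSpace ℝ (Fin (n + 1))) = z := by
  have h := hRfix k z (Set.mem_biUnion (Finset.mem_coe.2 (by simp)) hz)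
  exact (coe_YsubCollapse_of_mem (h ▸ hz)).trans h

include hRfix hRcoll in
lemma YsubCollapse_retraction_of_ne {j k : ℕ} (hjk : j ≠ k) {z : hawaiian n}
    (hz : (z : EuclideanSpace ℝ (Fin (n + 1))) ∈ hawSphere n (k + 1)) :
    YsubCollapse (j + 1) (j + 1) (R j z) = hawSpherePt n (j + 1) := by
  refine YsubCollapse_of_mem_of_ne (k := k + 1) (by omega) ?_
  rcases lt_or_gt_of_ne hjk with h | h
  · rw [hRcoll j (k + 1) (by omega) z hz]
    exact zero_mem_hawSphere n _
  · rwa [hRfix j z (Set.mem_biUnion (Finset.mem_coe.2 (by simp; omega)) hz)]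

/-- The map from the earring to the shrinking wedge of its spheres whose `j`-th coordinate collapses
all spheres but one. It is defined through the maps `R j` so that they determine its coordinates. -/
def toWedge : C(hawaiian n, ShrinkingWedge fun j => hawSpherePt n (j + 1)) :=
  lift (fun j => (YsubCollapse (j + 1) (j + 1)).comp (R j)) fun z i j hij => by
    obtain ⟨k, hk⟩ := exists_mem_hawSphere_succ z
    rcases ne_or_eq i k with hi | rfl
    · exact Or.inl (YsubCollapse_retraction_of_ne hRfix hRcoll hi hk)
    · exact Or.inr (YsubCollapse_retraction_of_ne hRfix hRcoll hij.symm hk)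

lemma ofWedge_comp_toWedge : (ofWedge n).comp (toWedge hRfix hRcoll) = .id _ := by
  refine ContinuousMap.ext fun z => Subtype.ext ?_
  obtain ⟨k, hk⟩ := exists_mem_hawSphere_succ z
  exact (tsum_coord_eq (fun _ => rfl) fun j hj =>
    YsubCollapse_retraction_of_ne hRfix hRcoll hj hk).trans (coe_YsubCollapse_retraction hRfix hk)

variable (hR0 : ∀ i : ℕ, R i (hawaiianPt n) = YsubPt n i)

include hR0 in
lemma toWedge_hawaiianPt : toWedge hRfix hRcoll (hawaiianPt n) = basePt _ :=
  ext_coord fun j =>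
    (congrArg (YsubCollapse (j + 1) (j + 1)) (hR0 j)).trans (YsubCollapse_YsubPt j (j + 1))

lemma piInduced_coord_toWedge {N : Type*} (j : ℕ)
    (γ : HomotopyGroup N (hawaiian n) (hawaiianPt n)) :
    piInduced N (coord j) (coord_basePt j)
        (piInduced N (toWedge hRfix hRcoll) (toWedge_hawaiianPt hRfix hRcoll hR0) γ) =
      piInduced N (YsubCollapse (j + 1) (j + 1)) (YsubCollapse_YsubPt j (j + 1))
        (piInduced N (R j) (hR0 j) γ) := by
  have hpt := congrArg (coord j) (toWedge_hawaiianPt hRfix hRcoll hR0)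
  exact (piInduced_piInduced _ (coord_basePt j) hpt rfl γ).trans
    (piInduced_piInduced (hR0 j) (YsubCollapse_YsubPt j (j + 1)) hpt rfl γ).symm

end Retraction

theorem beta_injective_general {N : Type*} [Fintype N] [Nontrivial N] {n : ℕ}
    (hN : Fintype.card N ≤ n) (R : ∀ i : ℕ, C(hawaiian n, Ysub n (i + 1)))
    (hRfix : ∀ (i : ℕ) (z : hawaiian n), (z : EuclideanSpace ℝ (Fin (n + 1))) ∈ Ysub n (i + 1) →
      (R i z : EuclideanSpace ℝ (Fin (n + 1))) = z)
    (hRcoll : ∀ i j : ℕ, i + 1 < j → ∀ z : hawaiian n,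
      (z : EuclideanSpace ℝ (Fin (n + 1))) ∈ hawSphere n j →
      (R i z : EuclideanSpace ℝ (Fin (n + 1))) = 0)
    (hR0 : ∀ i : ℕ, R i (hawaiianPt n) = YsubPt n i) :
    Function.Injective fun (γ : HomotopyGroup N (hawaiian n) (hawaiianPt n)) i =>
      piInduced N (R i) (hR0 i) γ := by
  have hgrid (j : ℕ) : GridDeformable N (hawSpherePt n (j + 1)) := by
    refine gridDeformable_sphere ?_ (by positivity) _
    rw [finrank_euclideanSpace_fin]
    omega
  intro γ δ hγδ
  have hwedge : piInduced N (toWedge hRfix hRcoll) (toWedge_hawaiianPt hRfix hRcoll hR0) γ =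
      piInduced N (toWedge hRfix hRcoll) (toWedge_hawaiianPt hRfix hRcoll hR0) δ := by
    refine injective_piInduced_coord hgrid (funext fun j => ?_)
    exact (piInduced_coord_toWedge hRfix hRcoll hR0 j γ).trans
      ((congrArg _ (congrFun hγδ j)).trans (piInduced_coord_toWedge hRfix hRcoll hR0 j δ).symm)
  have hid (ε : HomotopyGroup N (hawaiian n) (hawaiianPt n)) :
      piInduced N (ofWedge n) ofWedge_basePt
        (piInduced N (toWedge hRfix hRcoll) (toWedge_hawaiianPt hRfix hRcoll hR0) ε) = ε :=
    (piInduced_piInduced _ _ rfl (ofWedge_comp_toWedge hRfix hRcoll) ε).trans (piInduced_id ε)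
  rw [← hid γ, hwedge, hid]

end HawaiianEarring

/-- For `n = m+2 ≥ 2`, the natural homomorphism
`β_n : π_n(ℋ_n, 0) → ∏_{i ≥ 1} π_n(Y_i^{(n)}, 0)`, `γ ↦ ((R_i)_*(γ))_i`, is injective;
here `R i` is the retraction `ℋ_n → Y_{i+1}^{(n)}` fixing `Y_{i+1}^{(n)}` pointwise and
collapsing all spheres `S_j^n` with `j > i+1` to the origin. -/
theorem beta_injective (m : ℕ)
    (R : ∀ i : ℕ, C(↥(hawaiian (m+2)), ↥(Ysub (m+2) (i+1))))
    (hRfix : ∀ (i : ℕ) (z : ↥(hawaiian (m+2))),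
      (z : EuclideanSpace ℝ (Fin (m+3))) ∈ Ysub (m+2) (i+1) →
      ((R i z : ↥(Ysub (m+2) (i+1))) : EuclideanSpace ℝ (Fin (m+3))) = z)
    (hRcoll : ∀ (i j : ℕ), i + 1 < j → ∀ z : ↥(hawaiian (m+2)),
      (z : EuclideanSpace ℝ (Fin (m+3))) ∈ hawSphere (m+2) j →
      ((R i z : ↥(Ysub (m+2) (i+1))) : EuclideanSpace ℝ (Fin (m+3))) = 0)
    (hR0 : ∀ i : ℕ, R i (hawaiianPt (m+2)) = YsubPt (m+2) i)
    :
    Function.Injective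
      (fun γ : HomotopyGroup (Fin (m+2)) (hawaiian (m+2)) (hawaiianPt (m+2)) =>
        fun i : ℕ => piInduced (Fin (m+2)) (R i) (hR0 i) γ) :=
  beta_injective_general (by simp) R hRfix hRcoll hR0
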